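/- Let f be holomorphic on an open neighborhood of 0 in ℂ with f(0) = 0 and f'(0) = 1, and suppose (3 − f(z))·(2 − f(z))·f(z/3) = 2·f(z) for all z in a neighborhood of 0. Let κ_N := f^{(N)}(0)/N!. Then for every N ≥ 2: (2 − 2·3^{1−N})·κ_N = −5·∑_{j=1}^{N−1} 3^{−j}·κ_j·κ_{N−j} + ∑_{j=1}^{N−2} 3^{−j}·κ_j·∑_{k=1}^{N−j−1} κ_k·κ_{N−j−k}, where the second (double) sum is empty for N = 2. -/

import Mathlib

open Filter Topology

/-- Precomposition with multiplication by `c` multiplies the `n`-th derivative by `c ^ n`; no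
regularity of `f` is needed. -/
theorem iteratedDeriv_comp_mul_left {𝕜 : Type*} [NontriviallyNormedField 𝕜] (c : 𝕜) (f : 𝕜 → 𝕜)
    (n : ℕ) :
    iteratedDeriv n (fun z => f (c * z)) = fun z => c ^ n * iteratedDeriv n f (c * z) := by
  induction n with
  | zero => simp
  | succ n ih =>
    funext z
    rw [iteratedDeriv_succ, ih, deriv_const_mul_field, deriv_comp_mul_left, iteratedDeriv_succ,
      smul_eq_mul, pow_succ, mul_assoc]

/-- The Taylor coefficients of a product are the Cauchy product of the Taylor coefficients. -/
theorem iteratedDeriv_mul_div_factorial {𝕜 : Type*} [NontriviallyNormedField 𝕜] [CharZero 𝕜]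
    {f g : 𝕜 → 𝕜} {x : 𝕜} {n : ℕ} (hf : ContDiffAt 𝕜 n f x) (hg : ContDiffAt 𝕜 n g x) :
    iteratedDeriv n (f * g) x / (n.factorial : 𝕜) =
      ∑ i ∈ Finset.range (n + 1), iteratedDeriv i f x / (i.factorial : 𝕜) *
        (iteratedDeriv (n - i) g x / ((n - i).factorial : 𝕜)) := by
  rw [iteratedDeriv_mul hf hg, Finset.sum_div]
  refine Finset.sum_congr rfl fun i hi => ?_
  have hin : i ≤ n := Nat.lt_succ_iff.mp (Finset.mem_range.mp hi)
  have hn : (n.factorial : 𝕜) ≠ 0 := Nat.cast_ne_zero.mpr n.factorial_ne_zero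
  rw [Nat.cast_choose 𝕜 hin]
  field_simp

/-- If both factors vanish at `x`, the extreme terms of the Cauchy product drop out. -/
theorem iteratedDeriv_mul_div_factorial_of_eq_zero {𝕜 : Type*} [NontriviallyNormedField 𝕜]
    [CharZero 𝕜] {f g : 𝕜 → 𝕜} {x : 𝕜} {n : ℕ} (hf : ContDiffAt 𝕜 n f x)
    (hg : ContDiffAt 𝕜 n g x) (hf0 : f x = 0) (hg0 : g x = 0) :
    iteratedDeriv n (f * g) x / (n.factorial : 𝕜) =
      ∑ i ∈ Finset.Icc 1 (n - 1), iteratedDeriv i f x / (i.factorial : 𝕜) *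
        (iteratedDeriv (n - i) g x / ((n - i).factorial : 𝕜)) := by
  rw [iteratedDeriv_mul_div_factorial hf hg]
  symm
  refine Finset.sum_subset (fun i hi => ?_) fun i hi hi' => ?_
  · simp only [Finset.mem_Icc, Finset.mem_range] at *
    omega
  · simp only [Finset.mem_Icc, Finset.mem_range] at *
    obtain rfl | rfl : i = 0 ∨ i = n := by omega
    · simp [hf0]
    · simp [hg0]

/-- Recurrence (51) for the Taylor coefficients of `f = Φ⁻¹`, the inverse Schröder
linearizer for `G(z) = 2z/((3−z)(2−z))`: the functional equation
`(3 − f(z))(2 − f(z))·f(z/3) = 2f(z)` yields, for `N ≥ 2`,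
`(2 − 2·3^{1−N})κ_N = −5∑_{j=1}^{N−1} 3^{−j} κ_j κ_{N−j}
  + ∑_{j=1}^{N−2} 3^{−j} κ_j ∑_{k=1}^{N−j−1} κ_k κ_{N−j−k}`. -/
theorem stmt17 (f : ℂ → ℂ) (hf : AnalyticAt ℂ f 0) (hf0 : f 0 = 0)
    (hf'0 : deriv f 0 = 1)
    (hFE : ∀ᶠ z in 𝓝 (0 : ℂ), (3 - f z) * (2 - f z) * f (z / 3) = 2 * f z)
    (κ : ℕ → ℂ) (hκ : ∀ N : ℕ, κ N = iteratedDeriv N f 0 / (N.factorial : ℂ)) :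
    ∀ N : ℕ, 2 ≤ N →
      (2 - 2 * (3 : ℂ) ^ (1 - (N : ℤ))) * κ N =
        -5 * ∑ j ∈ Finset.Icc 1 (N - 1), (3 : ℂ) ^ (-(j : ℤ)) * κ j * κ (N - j) +
        ∑ j ∈ Finset.Icc 1 (N - 2), (3 : ℂ) ^ (-(j : ℤ)) * κ j *
          ∑ k ∈ Finset.Icc 1 (N - j - 1), κ k * κ (N - j - k) := by
  intro N hN
  set g : ℂ → ℂ := fun z => f (3⁻¹ * z) with hg_def
  have hg : AnalyticAt ℂ g 0 := by
    have hf' : AnalyticAt ℂ f (3⁻¹ * 0) := by simpa using hf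
    exact hf'.comp (f := fun z : ℂ => 3⁻¹ * z) (by fun_prop)
  have hg0 : g 0 = 0 := by simp [hg_def, hf0]
  have hgκ (j : ℕ) : iteratedDeriv j g 0 / (j.factorial : ℂ) = (3 : ℂ) ^ (-(j : ℤ)) * κ j := by
    rw [hκ, hg_def, iteratedDeriv_comp_mul_left]
    simp [mul_div_assoc]
  have hgf : iteratedDeriv N (g * f) 0 / (N.factorial : ℂ) =
      ∑ j ∈ Finset.Icc 1 (N - 1), (3 : ℂ) ^ (-(j : ℤ)) * κ j * κ (N - j) := by
    rw [iteratedDeriv_mul_div_factorial_of_eq_zero hg.contDiffAt hf.contDiffAt hg0 hf0]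
    simp only [hgκ, ← hκ]
  have hff (n : ℕ) : iteratedDeriv n (f * f) 0 / (n.factorial : ℂ) =
      ∑ k ∈ Finset.Icc 1 (n - 1), κ k * κ (n - k) := by
    rw [iteratedDeriv_mul_div_factorial_of_eq_zero hf.contDiffAt hf.contDiffAt hf0 hf0]
    simp only [← hκ]
  have hgff : iteratedDeriv N (g * (f * f)) 0 / (N.factorial : ℂ) =
      ∑ j ∈ Finset.Icc 1 (N - 2), (3 : ℂ) ^ (-(j : ℤ)) * κ j *
        ∑ k ∈ Finset.Icc 1 (N - j - 1), κ k * κ (N - j - k) := by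
    rw [iteratedDeriv_mul_div_factorial_of_eq_zero hg.contDiffAt (hf.mul hf).contDiffAt hg0
      (by simp [hf0])]
    simp only [hgκ, hff]
    symm
    refine Finset.sum_subset (Finset.Icc_subset_Icc_right (by omega)) fun j hj hj' => ?_
    simp only [Finset.mem_Icc] at hj hj'
    have hempty : Finset.Icc 1 (N - j - 1) = ∅ := Finset.Icc_eq_empty (by omega)
    simp [hempty]
  have hFE' : (fun z => 2 * f z) =ᶠ[𝓝 0]
      (fun z => 6 * g z) + ((fun z => -5 * (g * f) z) + g * (f * f)) := by
    filter_upwards [hFE] with z hz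
    rw [div_eq_inv_mul] at hz
    simp only [Pi.add_apply, Pi.mul_apply, hg_def, ← hz]
    ring
  have key := hFE'.iteratedDeriv_eq N
  have hgfA : AnalyticAt ℂ (g * f) 0 := hg.mul hf
  have hgffA : AnalyticAt ℂ (g * (f * f)) 0 := hg.mul (hf.mul hf)
  have h5 : AnalyticAt ℂ (fun z => -5 * (g * f) z) 0 := analyticAt_const.mul hgfA
  have h6 : AnalyticAt ℂ (fun z => 6 * g z) 0 := analyticAt_const.mul hg
  rw [iteratedDeriv_add h6.contDiffAt (h5.add hgffA).contDiffAt,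
    iteratedDeriv_add h5.contDiffAt hgffA.contDiffAt, iteratedDeriv_const_mul_field,
    iteratedDeriv_const_mul_field, iteratedDeriv_const_mul_field] at key
  have hpow : (3 : ℂ) ^ (1 - (N : ℤ)) = 3 * (3 : ℂ) ^ (-(N : ℤ)) := by
    rw [sub_eq_add_neg, zpow_add₀ three_ne_zero, zpow_one]
  rw [← hgf, ← hgff, hpow]
  linear_combination key / (N.factorial : ℂ) + 6 * hgκ N + 2 * hκ N
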